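/- For every N ∈ ℕ and every finite nonempty B ⊆ Λ_N: Σ_{A ⊆ Λ_N : Ā ∈ 𝒟_B} ρ(A) ≤ ( inf over A ∈ 𝒟_B with finite complement of Σ_{C ⊆ B} e^{J|C|} Z(A ∪ C)/Z(A) )^{−1}. -/

import Mathlib

open MeasureTheory Real
open Classical

namespace DeltaPinning

/-- Sites of the lattice `ℤ²`. -/
abbrev Site : Type := ℤ × ℤ

/-- The `ℓ¹`-distance on `ℤ²`. -/
def dist1 (i j : Site) : ℕ := (i.1 - j.1).natAbs + (i.2 - j.2).natAbs

/-- Nearest-neighbour adjacency on `ℤ²`. -/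
def adj (i j : Site) : Prop := dist1 i j = 1

/-- The `ℓ^∞`-norm on `ℤ²`. -/
def normInf (i : Site) : ℕ := max i.1.natAbs i.2.natAbs

/-- `ℓ¹`-distance from a site to a set. -/
noncomputable def dInf (i : Site) (A : Set Site) : ℕ := sInf {n | ∃ j ∈ A, dist1 i j = n}

/-- `x` and `y` are connected by a nearest-neighbour path inside `B`. -/
def connectedIn (B : Set Site) (x y : Site) : Prop :=
  ∃ (n : ℕ) (p : ℕ → Site), p 0 = x ∧ p n = y ∧ (∀ m ≤ n, p m ∈ B) ∧
    ∀ m < n, adj (p m) (p (m + 1))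

/-- The connected component of `x` inside `B`. -/
def component (B : Set Site) (x : Site) : Set Site := {y | connectedIn B x y}

/-- `C` is a connected component of `B`. -/
def IsComponent (B C : Set Site) : Prop := ∃ x ∈ B, C = component B x

/-- `B` is a connected set (w.r.t. nearest-neighbour adjacency). -/
def IsConnSet (B : Set Site) : Prop := ∀ x ∈ B, ∀ y ∈ B, connectedIn B x y

/-- Exterior boundary of a set. -/
def extBd (C : Set Site) : Set Site := {i | i ∉ C ∧ ∃ j ∈ C, adj i j}

/-- `A` is a dry neighbour of `B` : `A ∩ B = ∅` and `A` meets the exterior boundary of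
every connected component of `B`. -/
def dryNbr (B A : Set Site) : Prop :=
  A ∩ B = ∅ ∧ ∀ C : Set Site, IsComponent B C → (A ∩ extBd C).Nonempty

/-- `k`-enlargement of a set `D`. -/
def enl (D : Set Site) (k : ℕ) : Set Site := {i | ∃ j ∈ D, dist1 i j ≤ k}

/-- A tuple `κ` is admissible w.r.t. the components `Bc 0, …, Bc (n-1)`. -/
def admissible {n : ℕ} (Bc : Fin n → Set Site) (κ : Fin n → ℕ) : Prop :=
  ∀ l : Fin n, 0 < (l : ℕ) →
    (κ l = 0 ∨
      enl (Bc l) (κ l) ∩ (⋃ m : Fin n, ⋃ (_ : (m : ℕ) < (l : ℕ)), enl (Bc m) (κ m)) = ∅)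

/-- The union `B^{(κ)}` of the enlarged components. -/
def enlUnion {n : ℕ} (Bc : Fin n → Set Site) (κ : Fin n → ℕ) : Set Site :=
  ⋃ l : Fin n, enl (Bc l) (κ l)

/-- The box of radius `l` (in `ℓ^∞`-norm) centered at `x`. -/
def blk (l : ℕ) (x : Site) : Set Site := {y | normInf (y - x) ≤ l}

/-- The four nearest neighbours of a site. -/
def nbrs (y : Site) : Finset Site :=
  {y + ((1 : ℤ), (0 : ℤ)), y + (-1, 0), y + (0, 1), y + (0, -1)}

/-- `γ` is a nearest-neighbour path of the renormalized lattice `(2l+1)ℤ²` (written in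
renormalized coordinates) starting at `0`, leaving the box of radius `l·r` exactly at its
last point; i.e. an element of `Γ^l(r)`. -/
def pathInGamma (l r : ℕ) {k : ℕ} (γ : Fin (k + 1) → Site) : Prop :=
  γ 0 = 0 ∧ (∀ m : Fin k, adj (γ m.castSucc) (γ m.succ)) ∧
    l * r < normInf ((2 * (l : ℤ) + 1) • γ (Fin.last k)) ∧
    ∀ m : Fin (k + 1), m ≠ Fin.last k → normInf ((2 * (l : ℤ) + 1) • γ m) ≤ l * r

/-- The path `γ` is `(r,ε)`-clean in `A`: strictly fewer than `ε·r` of its vertices `x` are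
such that the block `𝐁((2l+1)x, l)` meets `A`. -/
noncomputable def cleanIn (l r : ℕ) (ε : ℝ) {k : ℕ} (γ : Fin (k + 1) → Site)
    (A : Set Site) : Prop :=
  ((((Finset.univ.image γ)).filter
      fun x => (blk l ((2 * (l : ℤ) + 1) • x) ∩ A).Nonempty).card : ℝ) < ε * r

/-- `A` is `(r,ε)`-clean: some path of `Γ^l(r)` is `(r,ε)`-clean in `A`. -/
def isClean (l r : ℕ) (ε : ℝ) (A : Set Site) : Prop :=
  ∃ (k : ℕ) (γ : Fin (k + 1) → Site), pathInGamma l r γ ∧ cleanIn l r ε γ A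

/-- Extension of a configuration on `Aᶜ` by `0` on `A`. -/
noncomputable def extZ (A : Set Site) (η : ↥(Aᶜ) → ℝ) : Site → ℝ :=
  fun i => if h : i ∈ Aᶜ then η ⟨i, h⟩ else 0

/-- Hamiltonian `H_A(φ)`: sum of `V(φ_i - φ_j)` over unordered nearest-neighbour pairs
`{i,j}` meeting `Aᶜ` (each unordered pair appears as two ordered pairs, whence `1/2`). -/
noncomputable def ham (V : ℝ → ℝ) (A : Set Site) (φ : Site → ℝ) : ℝ :=
  (1 / 2) * ∑ᶠ p : Site × Site,
    if adj p.1 p.2 ∧ (p.1 ∉ A ∨ p.2 ∉ A) then V (φ p.1 - φ p.2) else 0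

/-- Partition function `Z(A)` (defined when `Aᶜ` is finite, junk value `0` otherwise). -/
noncomputable def Zpart (V : ℝ → ℝ) (A : Set Site) : ℝ :=
  if h : (Aᶜ : Set Site).Finite then
    letI := h.fintype
    ∫ η : ↥(Aᶜ) → ℝ, Real.exp (- ham V A (extZ A η))
  else 0

/-- Expectation of `f` (a function of the by-`0`-extended field) under the Gibbs
measure `ℙ_A`. -/
noncomputable def gibbsExp (V : ℝ → ℝ) (A : Set Site) (f : (Site → ℝ) → ℝ) : ℝ :=
  if h : (Aᶜ : Set Site).Finite then
    letI := h.fintype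
    (∫ η : ↥(Aᶜ) → ℝ, f (extZ A η) * Real.exp (- ham V A (extZ A η))) / Zpart V A
  else 0

/-- The box `Λ_N = ([-N,N] ∩ ℤ)²`. -/
noncomputable def Lam (N : ℕ) : Finset Site := Finset.Icc (-(N : ℤ)) N ×ˢ Finset.Icc (-(N : ℤ)) N

/-- `Ā = A ∪ (ℤ² ∖ Λ_N)`. -/
def bar (N : ℕ) (A : Finset Site) : Set Site := ↑A ∪ (↑(Lam N) : Set Site)ᶜ

/-- Unnormalized pinning weight `e^{J|A|} Z(Ā)`. -/
noncomputable def wt (V : ℝ → ℝ) (J : ℝ) (N : ℕ) (A : Finset Site) : ℝ :=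
  Real.exp (J * A.card) * Zpart V (bar N A)

/-- Pinning weights `ρ(A)`, `A ⊆ Λ_N`. -/
noncomputable def rho (V : ℝ → ℝ) (J : ℝ) (N : ℕ) (A : Finset Site) : ℝ :=
  wt V J N A / ∑ D ∈ (Lam N).powerset, wt V J N D

/-- Extension of a configuration on `Λ_N` by `0` outside. -/
noncomputable def extF (N : ℕ) (φ : ↥(Lam N) → ℝ) : Site → ℝ :=
  fun i => if h : i ∈ Lam N then φ ⟨i, h⟩ else 0

/-- The base measure `∏_{i ∈ Λ_N} (dφ_i + e^J δ_0(dφ_i))`. -/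
noncomputable def pinnedBase (J : ℝ) (N : ℕ) : Measure (↥(Lam N) → ℝ) :=
  Measure.pi fun _ => (volume : Measure ℝ) + ENNReal.ofReal (Real.exp J) • Measure.dirac 0

/-- The unnormalized δ-pinned measure `e^{-H(φ)} ∏_{i∈Λ_N}(dφ_i + e^J δ_0(dφ_i))`. -/
noncomputable def pinnedRaw (V : ℝ → ℝ) (J : ℝ) (N : ℕ) : Measure (↥(Lam N) → ℝ) :=
  (pinnedBase J N).withDensity fun φ =>
    ENNReal.ofReal (Real.exp (- ham V ((↑(Lam N) : Set Site)ᶜ) (extF N φ)))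

/-- The δ-pinned measure `P̂_N`. -/
noncomputable def pinned (V : ℝ → ℝ) (J : ℝ) (N : ℕ) : Measure (↥(Lam N) → ℝ) :=
  (pinnedRaw V J N Set.univ)⁻¹ • pinnedRaw V J N

/-- Base measure for `ℙ̃_Ā`: Dirac mass at `0` at every coordinate of `A`, Lebesgue
elsewhere. -/
noncomputable def tildeBase (N : ℕ) (A : Finset Site) : Measure (↥(Lam N) → ℝ) :=
  Measure.pi fun i => if (i : Site) ∈ A then Measure.dirac 0 else (volume : Measure ℝ)

/-- Unnormalized version of `ℙ̃_Ā`. -/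
noncomputable def tildeRaw (V : ℝ → ℝ) (N : ℕ) (A : Finset Site) :
    Measure (↥(Lam N) → ℝ) :=
  (tildeBase N A).withDensity fun φ =>
    ENNReal.ofReal (Real.exp (- ham V (bar N A) (extF N φ)))

/-- The measure `ℙ̃_Ā` on `ℝ^{Λ_N}`: the Gibbs measure `ℙ_Ā` with Dirac mass `δ_0`
placed at every coordinate in `A`. -/
noncomputable def tildeP (V : ℝ → ℝ) (N : ℕ) (A : Finset Site) :
    Measure (↥(Lam N) → ℝ) :=
  (tildeRaw V N A Set.univ)⁻¹ • tildeRaw V N A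

/-- The sum `Σ_{C ⊆ B} e^{J|C|} Z(A ∪ C)/Z(A)`. -/
noncomputable def drySum (V : ℝ → ℝ) (J : ℝ) (B : Finset Site) (A : Set Site) : ℝ :=
  ∑ C ∈ B.powerset, Real.exp (J * C.card) * (Zpart V (A ∪ ↑C) / Zpart V A)

/-- `inf_{A ∈ 𝒟_B, |Aᶜ| < ∞} Σ_{C ⊆ B} e^{J|C|} Z(A ∪ C)/Z(A)`. -/
noncomputable def dryInf (V : ℝ → ℝ) (J : ℝ) (B : Finset Site) : ℝ :=
  sInf (drySum V J B '' {A : Set Site | dryNbr ↑B A ∧ (Aᶜ : Set Site).Finite})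

/-!
Write `w A = e^{J|A|} Z(Ā)`. If `A` is disjoint from `B ⊆ Λ_N`, then
`w A * ∑_{C ⊆ B} e^{J|C|} Z(Ā ∪ C) / Z(Ā) = ∑_{C ⊆ B} w (A ∪ C)`, and a set `D = A ∪ C` determines
both `A = D \ B` and `C = D ∩ B`. Summing over all dry neighbours therefore counts every `D ⊆ Λ_N`
at most once, so that `(∑_A w A) * inf ≤ ∑_D w D`, which is the bound after normalization.

The only analytic input is `0 < Z(A) < ∞`, for which linear growth of `V` suffices. Telescoping
along a straight walk from `i` until it first meets `A`, where the field vanishes, bounds `|φ i|` by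
the sum of all gradients of `φ`. Hence `H_A` grows at least linearly in the `ℓ¹`-norm of the field,
and `e^{-H_A}` is dominated by a product of integrable functions `e^{-c|φ i|}`.
-/

theorem sum_sum_powerset_union_le {ι R : Type*} [DecidableEq ι] [AddCommMonoid R]
    [PartialOrder R] [IsOrderedAddMonoid R] {w : Finset ι → R} (hw : ∀ D, 0 ≤ w D)
    {F : Finset (Finset ι)} {B Λ : Finset ι} (hdisj : ∀ A ∈ F, Disjoint A B)
    (hsub : ∀ A ∈ F, A ∪ B ⊆ Λ) :
    ∑ A ∈ F, ∑ C ∈ B.powerset, w (A ∪ C) ≤ ∑ D ∈ Λ.powerset, w D := by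
  have hinj : Set.InjOn (fun q : Finset ι × Finset ι ↦ q.1 ∪ q.2) ↑(F ×ˢ B.powerset) := by
    refine Set.LeftInvOn.injOn (f₁' := fun D ↦ (D \ B, D ∩ B)) fun ⟨A, C⟩ hq ↦ ?_
    obtain ⟨hA, hC⟩ : A ∈ F ∧ C ⊆ B := by simpa using hq
    ext1
    · simp [Finset.union_sdiff_distrib, Finset.sdiff_eq_self_of_disjoint (hdisj A hA),
        Finset.sdiff_eq_empty_iff_subset.2 hC]
    · simp [Finset.union_inter_distrib_right, Finset.disjoint_iff_inter_eq_empty.1 (hdisj A hA),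
        Finset.inter_eq_left.2 hC]
  rw [← Finset.sum_product' F B.powerset fun A C ↦ w (A ∪ C), ← Finset.sum_image (f := w) hinj]
  refine Finset.sum_le_sum_of_subset_of_nonneg (fun D hD ↦ ?_) fun D _ _ ↦ hw D
  obtain ⟨⟨A, C⟩, hq, rfl⟩ := Finset.mem_image.1 hD
  obtain ⟨hA, hC⟩ : A ∈ F ∧ C ⊆ B := by simpa using hq
  exact Finset.mem_powerset.2 ((Finset.union_subset_union_right hC).trans (hsub A hA))

theorem strongConvexOn_univ_of_le_iteratedDeriv_two {f : ℝ → ℝ} {m : ℝ} (hf : ContDiff ℝ 2 f)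
    (hm : ∀ t, m ≤ iteratedDeriv 2 f t) : StrongConvexOn Set.univ m f := by
  have hf' : ∀ t, HasDerivAt f (deriv f t) t :=
    fun t ↦ (hf.differentiable two_ne_zero t).hasDerivAt
  have hf'' : ∀ t, HasDerivAt (deriv f) (iteratedDeriv 2 f t) t := fun t ↦ by
    rw [iteratedDeriv_succ, iteratedDeriv_one]
    exact (hf.differentiable_deriv_two t).hasDerivAt
  rw [strongConvexOn_iff_convex]
  refine convexOn_of_hasDerivWithinAt2_nonneg convex_univ ?_
    (f' := fun t ↦ deriv f t - m * t) (f'' := fun t ↦ iteratedDeriv 2 f t - m)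
    (fun t _ ↦ HasDerivAt.hasDerivWithinAt ?_) (fun t _ ↦ HasDerivAt.hasDerivWithinAt ?_)
    fun t _ ↦ sub_nonneg.2 (hm t)
  · exact (hf.continuous.sub (by fun_prop)).continuousOn
  · simp only [Real.norm_eq_abs, sq_abs]
    convert! (hf' t).sub ((hasDerivAt_pow 2 t).const_mul (m / 2)) using 1
    ring
  · simpa only [mul_one] using! (hf'' t).sub ((hasDerivAt_id t).const_mul m)

theorem add_half_mul_sq_le_of_strongConvexOn_of_even {f : ℝ → ℝ} {m : ℝ}
    (hf : StrongConvexOn Set.univ m f) (heven : Function.Even f) (t : ℝ) :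
    f 0 + m / 2 * t ^ 2 ≤ f t := by
  obtain ⟨-, hconv⟩ := hf
  have hmid := hconv (Set.mem_univ t) (Set.mem_univ (-t)) one_half_pos.le one_half_pos.le
    (add_halves 1)
  simp only [smul_eq_mul, heven t, Real.norm_eq_abs, sq_abs] at hmid
  ring_nf at hmid ⊢
  linarith

theorem linear_growth_of_strongConvexOn_of_even {f : ℝ → ℝ} {m : ℝ} (hm : 0 ≤ m)
    (hf : StrongConvexOn Set.univ m f) (heven : Function.Even f) (t : ℝ) :
    f 0 - m / 2 + m * |t| ≤ f t := by
  have hquad := add_half_mul_sq_le_of_strongConvexOn_of_even hf heven t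
  have hsq : 0 ≤ m / 2 * (|t| - 1) ^ 2 := by positivity
  nlinarith [sq_abs t]

theorem integrable_exp_neg_mul_abs {c : ℝ} (hc : 0 < c) :
    Integrable fun x : ℝ ↦ exp (-c * |x|) := by
  refine Integrable.of_integral_ne_zero ?_
  rw [integral_comp_abs (f := fun x ↦ exp (-c * x)), integral_exp_mul_Ioi (neg_lt_zero.2 hc)]
  simp [hc.ne']

section PartitionFunction

variable {V : ℝ → ℝ} {A : Set Site}

/-- The set of ordered nearest-neighbour pairs with an endpoint outside `A`, over which the
Hamiltonian `H_A` is summed. Ordered pairs are used to match `ham`. -/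
def bonds (A : Set Site) : Set (Site × Site) :=
  {p | adj p.1 p.2 ∧ (p.1 ∉ A ∨ p.2 ∉ A)}

theorem finite_setOf_adj (i : Site) : {j | adj i j}.Finite := by
  refine (Set.finite_Icc (i - (1, 1)) (i + (1, 1))).subset fun j hj ↦ ?_
  simp only [adj, dist1, Set.mem_ofPred_eq, Set.mem_Icc, Prod.le_def, Prod.fst_sub, Prod.snd_sub,
    Prod.fst_add, Prod.snd_add] at hj ⊢
  omega

theorem adj_comm {i j : Site} : adj i j ↔ adj j i := by
  simp only [adj, dist1]
  omega

theorem finite_bonds (hA : Aᶜ.Finite) : (bonds A).Finite := by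
  have hout : (⋃ i ∈ Aᶜ, Prod.mk i '' {j | adj i j}).Finite :=
    hA.biUnion fun i _ ↦ (finite_setOf_adj i).image _
  refine (hout.union (hout.image Prod.swap)).subset ?_
  rintro ⟨i, j⟩ ⟨hij, hi | hj⟩
  · exact Or.inl (Set.mem_biUnion hi ⟨j, hij, rfl⟩)
  · exact Or.inr ⟨(j, i), Set.mem_biUnion hj ⟨i, adj_comm.1 hij, rfl⟩, rfl⟩

theorem ham_eq_sum_bonds (V : ℝ → ℝ) (hA : Aᶜ.Finite) (φ : Site → ℝ) :
    ham V A φ = 1 / 2 * ∑ p ∈ (finite_bonds hA).toFinset, V (φ p.1 - φ p.2) := by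
  rw [← finsum_mem_eq_finite_toFinset_sum, ham]
  congr 1
  exact finsum_congr fun p ↦ by simp only [finsum_eq_if, bonds, Set.mem_ofPred_eq]

theorem exists_add_east_mem (hA : Aᶜ.Finite) (i : Site) : ∃ k : ℕ, i + ((k : ℤ), 0) ∈ A := by
  by_contra! houtside
  refine Set.infinite_of_injective_forall_mem (fun k l hkl ↦ ?_) houtside hA
  simpa using hkl

theorem abs_le_sum_bonds (hA : Aᶜ.Finite) {φ : Site → ℝ} (hφ : ∀ i ∈ A, φ i = 0) (i : Site) :
    |φ i| ≤ ∑ p ∈ (finite_bonds hA).toFinset, |φ p.1 - φ p.2| := by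
  have hexit := exists_add_east_mem hA i
  set k := Nat.find hexit
  let walk : ℕ → Site := fun m ↦ i + ((m : ℤ), 0)
  have hbond : ∀ m < k, (walk m, walk (m + 1)) ∈ bonds A := fun m hm ↦
    ⟨by simp [walk, adj, dist1], Or.inl (Nat.find_min hexit hm)⟩
  have hinj : Function.Injective fun m ↦ (walk m, walk (m + 1)) := fun m n hmn ↦ by
    simpa [walk] using congrArg Prod.fst hmn
  calc |φ i| = dist (φ (walk 0)) (φ (walk k)) := by
        rw [hφ (walk k) (Nat.find_spec hexit), Real.dist_eq, sub_zero]
        simp [walk, ← Prod.zero_eq_mk]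
    _ ≤ ∑ m ∈ Finset.range k, |φ (walk m) - φ (walk (m + 1))| :=
        dist_le_range_sum_dist (fun m ↦ φ (walk m)) k
    _ = ∑ p ∈ (Finset.range k).image fun m ↦ (walk m, walk (m + 1)), |φ p.1 - φ p.2| :=
        (Finset.sum_image (f := fun p : Site × Site ↦ |φ p.1 - φ p.2|) hinj.injOn).symm
    _ ≤ _ := by
        refine Finset.sum_le_sum_of_subset_of_nonneg (fun p hp ↦ ?_) fun _ _ _ ↦ abs_nonneg _
        obtain ⟨m, hm, rfl⟩ := Finset.mem_image.1 hp
        exact (finite_bonds hA).mem_toFinset.2 (hbond m (Finset.mem_range.1 hm))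

theorem linear_growth_ham {a b : ℝ} (hb : 0 < b) (hV : ∀ t, a + b * |t| ≤ V t)
    (hA : Aᶜ.Finite) :
    ∃ K, ∃ c > 0, ∀ φ : Site → ℝ, (∀ i ∈ A, φ i = 0) →
      K + c * ∑ i ∈ hA.toFinset, |φ i| ≤ ham V A φ := by
  set E := (finite_bonds hA).toFinset
  set n := hA.toFinset.card
  refine ⟨1 / 2 * (E.card * a), b / (2 * (n + 1)), by positivity, fun φ hφ ↦ ?_⟩
  set S := ∑ p ∈ E, |φ p.1 - φ p.2|
  have hS : 0 ≤ S := Finset.sum_nonneg fun _ _ ↦ abs_nonneg _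
  have hfield : ∑ i ∈ hA.toFinset, |φ i| ≤ (n + 1) * S := by
    have := Finset.sum_le_card_nsmul hA.toFinset _ S fun i _ ↦ abs_le_sum_bonds hA hφ i
    rw [nsmul_eq_mul] at this
    linarith
  have hpotential : E.card * a + b * S ≤ ∑ p ∈ E, V (φ p.1 - φ p.2) := by
    rw [Finset.mul_sum, ← nsmul_eq_mul, ← Finset.sum_const, ← Finset.sum_add_distrib]
    exact Finset.sum_le_sum fun p _ ↦ hV _
  calc 1 / 2 * (E.card * a) + b / (2 * (n + 1)) * ∑ i ∈ hA.toFinset, |φ i|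
      ≤ 1 / 2 * (E.card * a) + b / (2 * (n + 1)) * ((n + 1) * S) := by gcongr
    _ = 1 / 2 * (E.card * a + b * S) := by field_simp
    _ ≤ ham V A φ := by
        rw [ham_eq_sum_bonds V hA]
        gcongr

theorem extZ_of_mem (η : ↥Aᶜ → ℝ) {i : Site} (hi : i ∈ A) : extZ A η i = 0 :=
  dif_neg (not_not.2 hi)

theorem extZ_coe (η : ↥Aᶜ → ℝ) (i : ↥Aᶜ) : extZ A η i = η i :=
  dif_pos i.2

theorem measurable_extZ (A : Set Site) : Measurable (extZ A) := by
  refine measurable_pi_lambda _ fun i ↦ ?_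
  by_cases hi : i ∈ Aᶜ
  · simpa only [extZ, dif_pos hi] using measurable_pi_apply _
  · simp only [extZ, dif_neg hi, measurable_const]

theorem measurable_ham (hV : Measurable V) (hA : Aᶜ.Finite) : Measurable (ham V A) := by
  simp only [funext (ham_eq_sum_bonds V hA)]
  fun_prop

theorem integrable_exp_neg_ham (hVm : Measurable V) {a b : ℝ} (hb : 0 < b)
    (hV : ∀ t, a + b * |t| ≤ V t) [Fintype ↥Aᶜ] :
    Integrable fun η : ↥Aᶜ → ℝ ↦ exp (-ham V A (extZ A η)) := by
  have hA : Aᶜ.Finite := Set.toFinite _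
  obtain ⟨K, c, hc, hham⟩ := linear_growth_ham hb hV hA
  have hbound : Integrable fun η : ↥Aᶜ → ℝ ↦ exp (-K) * ∏ i, exp (-c * |η i|) :=
    (Integrable.fintype_prod (f := fun _ x ↦ exp (-c * |x|))
      fun _ ↦ integrable_exp_neg_mul_abs hc).const_mul _
  refine hbound.mono' ?_ (.of_forall fun η ↦ ?_)
  · exact ((measurable_ham hVm hA).comp (measurable_extZ A)).neg.exp.aestronglyMeasurable
  · have hsum : ∑ i ∈ hA.toFinset, |extZ A η i| = ∑ i : ↥Aᶜ, |η i| := by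
      rw [hA.toFinset_eq_toFinset, ← Finset.sum_set_coe]
      simp only [extZ_coe]
    rw [Real.norm_eq_abs, Real.abs_exp, ← Real.exp_sum, ← Real.exp_add, ← Finset.mul_sum, ← hsum]
    gcongr
    linarith [hham (extZ A η) fun i ↦ extZ_of_mem η]

theorem Zpart_nonneg (V : ℝ → ℝ) (A : Set Site) : 0 ≤ Zpart V A := by
  unfold Zpart
  split_ifs
  · exact integral_nonneg fun _ ↦ (exp_pos _).le
  · exact le_rfl

theorem Zpart_pos (hVm : Measurable V) {a b : ℝ} (hb : 0 < b) (hV : ∀ t, a + b * |t| ≤ V t)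
    (hA : Aᶜ.Finite) : 0 < Zpart V A := by
  rw [Zpart, dif_pos hA]
  let := hA.fintype
  exact integral_exp_pos (integrable_exp_neg_ham hVm hb hV)

end PartitionFunction

section DryNeighbours

variable {V : ℝ → ℝ} {J : ℝ} {N : ℕ} {A B : Finset Site}

theorem finite_compl_bar (N : ℕ) (A : Finset Site) : (bar N A)ᶜ.Finite :=
  (Lam N).finite_toSet.subset (Set.compl_subset_comm.1 Set.subset_union_right)

theorem bar_union (N : ℕ) (A C : Finset Site) : bar N (A ∪ C) = bar N A ∪ ↑C := by
  simp only [bar, Finset.coe_union, Set.union_right_comm]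

theorem disjoint_of_dryNbr_bar (h : dryNbr ↑B (bar N A)) : Disjoint A B :=
  Finset.disjoint_coe.1
    ((Set.disjoint_iff_inter_eq_empty.2 h.1).mono_left Set.subset_union_left)

theorem subset_Lam_of_dryNbr_bar (h : dryNbr ↑B (bar N A)) : B ⊆ Lam N :=
  Finset.coe_subset.1 <| Set.disjoint_compl_left_iff_subset.1
    ((Set.disjoint_iff_inter_eq_empty.2 h.1).mono_left Set.subset_union_right)

theorem wt_nonneg (V : ℝ → ℝ) (J : ℝ) (N : ℕ) (A : Finset Site) : 0 ≤ wt V J N A :=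
  mul_nonneg (exp_pos _).le (Zpart_nonneg V _)

theorem wt_mul_drySum (J : ℝ) (hZ : Zpart V (bar N A) ≠ 0) (hAB : Disjoint A B) :
    wt V J N A * drySum V J B (bar N A) = ∑ C ∈ B.powerset, wt V J N (A ∪ C) := by
  rw [drySum, Finset.mul_sum]
  refine Finset.sum_congr rfl fun C hC ↦ ?_
  have hAC : Disjoint A C := hAB.mono_right (Finset.mem_powerset.1 hC)
  rw [wt, wt, bar_union, Finset.card_union_of_disjoint hAC, Nat.cast_add, mul_add, exp_add]
  field_simp

theorem drySum_nonneg (V : ℝ → ℝ) (J : ℝ) (B : Finset Site) (A : Set Site) :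
    0 ≤ drySum V J B A :=
  Finset.sum_nonneg fun _ _ ↦
    mul_nonneg (exp_pos _).le (div_nonneg (Zpart_nonneg V _) (Zpart_nonneg V _))

theorem one_le_drySum (J : ℝ) (B : Finset Site) {A : Set Site} (hZ : Zpart V A ≠ 0) :
    1 ≤ drySum V J B A := by
  have := Finset.single_le_sum
    (f := fun C : Finset Site ↦ exp (J * C.card) * (Zpart V (A ∪ ↑C) / Zpart V A))
    (fun C _ ↦ mul_nonneg (exp_pos _).le (div_nonneg (Zpart_nonneg V _) (Zpart_nonneg V _)))
    (Finset.empty_mem_powerset B)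
  simpa [drySum, hZ] using this

theorem dryInf_nonneg (V : ℝ → ℝ) (J : ℝ) (B : Finset Site) : 0 ≤ dryInf V J B :=
  Real.sInf_nonneg (Set.forall_mem_image.2 fun A _ ↦ drySum_nonneg V J B A)

theorem dryInf_le_drySum (V : ℝ → ℝ) (J : ℝ) {A : Set Site} (hdry : dryNbr ↑B A)
    (hA : Aᶜ.Finite) : dryInf V J B ≤ drySum V J B A :=
  csInf_le ⟨0, Set.forall_mem_image.2 fun A _ ↦ drySum_nonneg V J B A⟩ ⟨A, ⟨hdry, hA⟩, rfl⟩

theorem one_le_dryInf (hZ : ∀ A : Set Site, Aᶜ.Finite → 0 < Zpart V A) (J : ℝ) {A : Set Site}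
    (hdry : dryNbr ↑B A) (hA : Aᶜ.Finite) : 1 ≤ dryInf V J B :=
  le_csInf ⟨_, A, ⟨hdry, hA⟩, rfl⟩
    (Set.forall_mem_image.2 fun A' hA' ↦ one_le_drySum J B (hZ A' hA'.2).ne')

theorem sum_dryNbr_wt_mul_dryInf_le (hZ : ∀ A : Set Site, Aᶜ.Finite → 0 < Zpart V A)
    (J : ℝ) (N : ℕ) (B : Finset Site) :
    (∑ A ∈ (Lam N).powerset with dryNbr ↑B (bar N A), wt V J N A) * dryInf V J B
      ≤ ∑ D ∈ (Lam N).powerset, wt V J N D := by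
  have hdry {A : Finset Site} (hA : A ∈ {A ∈ (Lam N).powerset | dryNbr ↑B (bar N A)}) :
      A ⊆ Lam N ∧ dryNbr ↑B (bar N A) := by simpa using hA
  rw [Finset.sum_mul]
  calc ∑ A ∈ (Lam N).powerset with dryNbr ↑B (bar N A), wt V J N A * dryInf V J B
      ≤ ∑ A ∈ (Lam N).powerset with dryNbr ↑B (bar N A), wt V J N A * drySum V J B (bar N A) :=
        Finset.sum_le_sum fun A hA ↦ mul_le_mul_of_nonneg_left
          (dryInf_le_drySum V J (hdry hA).2 (finite_compl_bar N A)) (wt_nonneg V J N A)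
    _ = ∑ A ∈ (Lam N).powerset with dryNbr ↑B (bar N A), ∑ C ∈ B.powerset, wt V J N (A ∪ C) :=
        Finset.sum_congr rfl fun A hA ↦
          wt_mul_drySum J (hZ _ (finite_compl_bar N A)).ne' (disjoint_of_dryNbr_bar (hdry hA).2)
    _ ≤ _ := sum_sum_powerset_union_le (wt_nonneg V J N)
        (fun A hA ↦ disjoint_of_dryNbr_bar (hdry hA).2)
        fun A hA ↦ Finset.union_subset (hdry hA).1 (subset_Lam_of_dryNbr_bar (hdry hA).2)

end DryNeighbours

theorem statement10_general {V : ℝ → ℝ} (hVm : Measurable V) {a b : ℝ} (hb : 0 < b)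
    (hV : ∀ t, a + b * |t| ≤ V t) (J : ℝ) (N : ℕ) (B : Finset Site) :
    (∑ A ∈ (Lam N).powerset, if dryNbr (↑B) (bar N A) then rho V J N A else 0)
      ≤ (dryInf V J B)⁻¹ := by
  have hZ : ∀ A : Set Site, Aᶜ.Finite → 0 < Zpart V A := fun A ↦ Zpart_pos hVm hb hV
  have htotal : 0 < ∑ D ∈ (Lam N).powerset, wt V J N D :=
    Finset.sum_pos (fun D _ ↦ mul_pos (exp_pos _) (hZ _ (finite_compl_bar N D)))
      (Finset.powerset_nonempty _)
  by_cases hdry : ∃ A, dryNbr (↑B) (bar N A)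
  · obtain ⟨A, hA⟩ := hdry
    have hinf : 0 < dryInf V J B :=
      zero_lt_one.trans_le (one_le_dryInf hZ J hA (finite_compl_bar N A))
    simp only [rho]
    rw [← Finset.sum_filter, ← Finset.sum_div, div_le_iff₀ htotal, le_inv_mul_iff₀' hinf]
    exact sum_dryNbr_wt_mul_dryInf_le hZ J N B
  · simp only [not_exists.1 hdry, if_false, Finset.sum_const_zero, inv_nonneg, dryInf_nonneg]

/-- the total pinning weight of dry neighbours of `B` is bounded by the
inverse of `inf_{A ∈ 𝒟_B} Σ_{C ⊆ B} e^{J|C|} Z(A∪C)/Z(A)`. -/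
theorem statement10
    (c_V : ℝ) (hcV : 1 ≤ c_V) (V : ℝ → ℝ)
    (hVsmooth : ContDiff ℝ (⊤ : ℕ∞) V) (hVeven : ∀ t, V (-t) = V t)
    (hVlb : ∀ t, 1 / c_V ≤ iteratedDeriv 2 V t)
    (hVub : ∀ t, iteratedDeriv 2 V t ≤ c_V)
    (J : ℝ) (N : ℕ) (B : Finset Site) (hB : B.Nonempty) :
    (∑ A ∈ (Lam N).powerset, if dryNbr (↑B) (bar N A) then rho V J N A else 0)
      ≤ (dryInf V J B)⁻¹ := by
  have hc : 0 < 1 / c_V := one_div_pos.2 (zero_lt_one.trans_le hcV)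
  have hconv : StrongConvexOn Set.univ (1 / c_V) V :=
    strongConvexOn_univ_of_le_iteratedDeriv_two (contDiff_infty.1 hVsmooth 2) hVlb
  exact statement10_general hVsmooth.continuous.measurable hc
    (linear_growth_of_strongConvexOn_of_even hc.le hconv hVeven) J N B

end DeltaPinning
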